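/- Let V be a finite set, f : 2^V → ℝ a monotone function with f(S) ≥ 0 for all S, and a partition matroid constraint on V with d̄ = min_i d_i. Let d*₁,…,d*_k be new thresholds with 1 ≤ d*_i ≤ |B_i|, d* = Σ_i d*_i and d̄* = min_i d*_i, assume d̄* > d̄, and let OPT* be a D*-feasible maximizer of f. Let γ with 0 ≤ γ ≤ 1 be a submodularity-ratio lower bound for f with parameters (d̄*, d*). Suppose X₀ ⊆ V satisfies |X₀| ≤ d̄ and f(X₀) ≥ [1 − (1 − γ/d*)^{d̄}]·f(OPT*). Define X_{j+1} = X_j ∪ {v_j}, where v_j maximizes f(X_j∪{v}) over all v ∈ V∖X_j with X_j∪{v} D*-feasible. Then the set Y = X_{d̄*−d̄} obtained after d̄* − d̄ such greedy additions is D*-feasible, has |Y| ≤ d̄*, and satisfies f(Y) ≥ [1 − (1 − γ/d*)^{d̄*}]·f(OPT*) ≥ (1 − e^{−γ·d̄*/d*})·f(OPT*). -/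

import Mathlib

/-!
While the current set `X` has fewer than `d̄*` elements, every single insertion keeps it
`D*`-feasible, so a greedy step is unconstrained: its gain is at least the gain of inserting any
`w ∈ OPT* \ X`. The submodularity ratio bounds the sum of these at most `d*` gains below by
`γ * (f OPT* - f X)`, so each step shrinks the gap `f OPT* - f X` by the factor `1 - γ / d*`.
The hypothesis on `X₀` says that its gap is already at most what `d̄` such steps would leave.
-/

section

variable {V : Type*} [DecidableEq V]

/-- `γ` is a submodularity-ratio lower bound for `f` with parameters `(i, j)`: on sets with fewer
than `i` elements, inserting the elements of a disjoint set `L` of size at most `j` one by one gains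
in total at least `γ` times what inserting `L` at once gains. -/
def IsSubmodularityRatioBound (f : Finset V → ℝ) (γ : ℝ) (i j : ℕ) : Prop :=
  ∀ X L : Finset V, Disjoint X L → X.card < i → L.card ≤ j →
    γ * (f (X ∪ L) - f X) ≤ ∑ v ∈ L, (f (insert v X) - f X)

/-- Feasibility for the partition matroid with blocks `B` and thresholds `D`. That the blocks
form a partition is not part of the notion. -/
def IsBlockFeasible {ι : Type*} (B : ι → Finset V) (D : ι → ℕ) (S : Finset V) : Prop :=
  ∀ i, (S ∩ B i).card ≤ D i

/-- `Y` arises from `X` by one step of the greedy algorithm for maximizing `f` under the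
constraint `P`: a new element is added whose insertion is best among the insertions that
satisfy `P`. -/
def IsGreedyStep (P : Finset V → Prop) (f : Finset V → ℝ) (X Y : Finset V) : Prop :=
  ∃ v ∉ X, Y = insert v X ∧ P (insert v X) ∧
    ∀ w ∉ X, P (insert w X) → f (insert w X) ≤ f (insert v X)

namespace IsBlockFeasible

variable {ι : Type*} {B : ι → Finset V} {D : ι → ℕ} {S : Finset V}

theorem of_card_le {m : ℕ} (hm : ∀ i, m ≤ D i) (hS : S.card ≤ m) : IsBlockFeasible B D S :=
  fun i => (Finset.card_le_card Finset.inter_subset_left).trans (hS.trans (hm i))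

theorem card_le_sum [Fintype ι] (hS : IsBlockFeasible B D S) (hcover : ∀ v ∈ S, ∃ i, v ∈ B i) :
    S.card ≤ ∑ i, D i := by
  have hsub : S ⊆ Finset.univ.biUnion fun i => S ∩ B i := fun v hv => by
    simpa [hv] using hcover v hv
  calc S.card ≤ (Finset.univ.biUnion fun i => S ∩ B i).card := Finset.card_le_card hsub
    _ ≤ ∑ i, (S ∩ B i).card := Finset.card_biUnion_le
    _ ≤ ∑ i, D i := Finset.sum_le_sum fun i _ => hS i

end IsBlockFeasible

variable {P : Finset V → Prop} {f : Finset V → ℝ} {γ : ℝ} {O : Finset V}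

theorem IsSubmodularityRatioBound.mul_sub_le {i j : ℕ} {X : Finset V} {δ : ℝ}
    (hγ : IsSubmodularityRatioBound f γ i j) (hγ0 : 0 ≤ γ) (hf : Monotone f)
    (hX : X.card < i) (hO : O.card ≤ j) (hδ0 : 0 ≤ δ)
    (hδ : ∀ w ∉ X, f (insert w X) - f X ≤ δ) :
    γ * (f O - f X) ≤ j * δ := by
  have hcard : (O \ X).card ≤ j := (Finset.card_le_card Finset.sdiff_subset).trans hO
  have hsub : O ⊆ X ∪ (O \ X) := by
    rw [Finset.union_sdiff_self_eq_union]
    exact Finset.subset_union_right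
  calc γ * (f O - f X) ≤ γ * (f (X ∪ (O \ X)) - f X) := by gcongr; exact hf hsub
    _ ≤ ∑ w ∈ O \ X, (f (insert w X) - f X) := hγ X (O \ X) Finset.disjoint_sdiff hX hcard
    _ ≤ (O \ X).card • δ :=
      Finset.sum_le_card_nsmul _ _ _ fun w hw => hδ w (Finset.mem_sdiff.1 hw).2
    _ ≤ j * δ := by rw [nsmul_eq_mul]; gcongr

namespace IsGreedyStep

theorem card_eq {X Y : Finset V} (h : IsGreedyStep P f X Y) : Y.card = X.card + 1 := by
  obtain ⟨v, hv, rfl, -⟩ := h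
  exact Finset.card_insert_of_notMem hv

theorem card_chain_eq {X : ℕ → Finset V} {t : ℕ}
    (hX : ∀ j < t, IsGreedyStep P f (X j) (X (j + 1))) {j : ℕ} (hj : j ≤ t) :
    (X j).card = (X 0).card + j := by
  induction j with
  | zero => rfl
  | succ j ih => rw [(hX j hj).card_eq, ih (Nat.le_of_succ_le hj), add_assoc]

theorem gap_le {X Y : Finset V} {m n : ℕ} (h : IsGreedyStep P f X Y)
    (hP : ∀ w ∉ X, P (insert w X)) (hf : Monotone f)
    (hγ : IsSubmodularityRatioBound f γ m n) (hγ0 : 0 ≤ γ)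
    (hX : X.card < m) (hn : 0 < n) (hO : O.card ≤ n) :
    f O - f Y ≤ (1 - γ / n) * (f O - f X) := by
  obtain ⟨v, -, rfl, -, hbest⟩ := h
  have hgain : γ * (f O - f X) ≤ n * (f (insert v X) - f X) :=
    hγ.mul_sub_le hγ0 hf hX hO (sub_nonneg.2 (hf (Finset.subset_insert v X)))
      fun w hw => sub_le_sub_right (hbest w hw (hP w hw)) _
  have hgain' : γ / n * (f O - f X) ≤ f (insert v X) - f X := by
    rwa [div_mul_eq_mul_div, div_le_iff₀' (Nat.cast_pos.2 hn)]
  linarith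

theorem gap_chain_le {X : ℕ → Finset V} {m n t : ℕ}
    (hX : ∀ j < t, IsGreedyStep P f (X j) (X (j + 1)))
    (hP : ∀ S : Finset V, S.card ≤ m → P S) (hf : Monotone f)
    (hγ : IsSubmodularityRatioBound f γ m n) (hγ0 : 0 ≤ γ) (hγn : γ ≤ n)
    (hX0 : (X 0).card + t ≤ m) (hn : 0 < n) (hO : O.card ≤ n) :
    f O - f (X t) ≤ (1 - γ / n) ^ t * (f O - f (X 0)) := by
  refine le_geom (u := fun j => f O - f (X j))
    (sub_nonneg.2 (div_le_one_of_le₀ hγn n.cast_nonneg)) t fun j hj => ?_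
  have hcard : (X j).card < m := by
    rw [card_chain_eq hX hj.le]
    omega
  exact (hX j hj).gap_le (fun w _ => hP _ ((Finset.card_insert_le w _).trans hcard))
    hf hγ hγ0 hcard hn hO

end IsGreedyStep

theorem one_sub_div_pow_le_exp {x y : ℝ} (hy : 0 < y) (hxy : x ≤ y) (m : ℕ) :
    (1 - x / y) ^ m ≤ Real.exp (-(x * m) / y) :=
  calc (1 - x / y) ^ m ≤ Real.exp (-(x / y)) ^ m :=
        pow_le_pow_left₀ (sub_nonneg.2 ((div_le_one hy).2 hxy)) (Real.one_sub_le_exp_neg _) m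
    _ = Real.exp (-(x * m) / y) := by
        rw [← Real.exp_nat_mul]
        congr 1
        ring

theorem adaptation_monotone_general {X : ℕ → Finset V} {s m n : ℕ} (hsm : s ≤ m)
    (hP : ∀ S : Finset V, S.card ≤ m → P S) (hf : Monotone f)
    (hn : 0 < n) (hO : O.card ≤ n) (hO0 : 0 ≤ f O)
    (hγ : IsSubmodularityRatioBound f γ m n) (hγ0 : 0 ≤ γ) (hγn : γ ≤ n)
    (hX0card : (X 0).card ≤ s) (hX0val : (1 - (1 - γ / n) ^ s) * f O ≤ f (X 0))
    (hX : ∀ j < m - s, IsGreedyStep P f (X j) (X (j + 1))) :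
    P (X (m - s)) ∧ (X (m - s)).card ≤ m ∧
      (1 - (1 - γ / n) ^ m) * f O ≤ f (X (m - s)) ∧
      (1 - Real.exp (-(γ * m) / n)) * f O ≤ f (X (m - s)) := by
  have hn' : (0 : ℝ) < n := Nat.cast_pos.2 hn
  have hcard : (X (m - s)).card ≤ m := by
    rw [IsGreedyStep.card_chain_eq hX le_rfl]
    omega
  have hfactor : 0 ≤ 1 - γ / n := sub_nonneg.2 ((div_le_one hn').2 hγn)
  have hgap : f O - f (X (m - s)) ≤ (1 - γ / n) ^ m * f O :=
    calc f O - f (X (m - s)) ≤ (1 - γ / n) ^ (m - s) * (f O - f (X 0)) :=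
          IsGreedyStep.gap_chain_le hX hP hf hγ hγ0 hγn (by omega) hn hO
      _ ≤ (1 - γ / n) ^ (m - s) * ((1 - γ / n) ^ s * f O) := by gcongr; linarith
      _ = (1 - γ / n) ^ m * f O := by rw [← mul_assoc, ← pow_add, Nat.sub_add_cancel hsm]
  have hexp : (1 - γ / n) ^ m * f O ≤ Real.exp (-(γ * m) / n) * f O :=
    mul_le_mul_of_nonneg_right (one_sub_div_pow_le_exp hn' hγn m) hO0
  exact ⟨hP _ hcard, hcard, by linarith, by linarith⟩

end

/-- Adaptation after a threshold increase (`d̄* > d̄`), monotone case: if `γ ∈ [0,1]`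
is a submodularity-ratio lower bound for `f` with parameters `(d̄*, d*)`, `X₀` has
`|X₀| ≤ d̄` and `f X₀ ≥ [1-(1-γ/d*)^d̄]·f OPT*`, then the set `Y = X_{d̄*-d̄}`
obtained after `d̄*-d̄` greedy additions (with respect to the new thresholds `D*`)
is `D*`-feasible, has `|Y| ≤ d̄*`, and satisfies both
`f Y ≥ [1-(1-γ/d*)^{d̄*}]·f OPT*` and `f Y ≥ (1-e^{-γ·d̄*/d*})·f OPT*`. -/
theorem adaptation_monotone {V : Type*} [Fintype V] [DecidableEq V] {k : ℕ}
    (hk : 0 < k)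
    (B : Fin k → Finset V) (hpart : ∀ v : V, ∃! i, v ∈ B i)
    (hBne : ∀ i, (B i).Nonempty)
    (D Dstar : Fin k → ℕ)
    (hD : ∀ i, 1 ≤ D i ∧ D i ≤ (B i).card)
    (hDstar : ∀ i, 1 ≤ Dstar i ∧ Dstar i ≤ (B i).card)
    (dbar dbarstar : ℕ)
    (hdbar : dbar = Finset.univ.inf' ⟨⟨0, hk⟩, Finset.mem_univ _⟩ D)
    (hdbarstar : dbarstar = Finset.univ.inf' ⟨⟨0, hk⟩, Finset.mem_univ _⟩ Dstar)
    (hgt : dbar < dbarstar)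
    (f : Finset V → ℝ) (hf0 : ∀ S, 0 ≤ f S)
    (hmono : ∀ X Y : Finset V, X ⊆ Y → f X ≤ f Y)
    (OPTstar : Finset V) (hOPTfeas : ∀ i, (OPTstar ∩ B i).card ≤ Dstar i)
    (hOPTmax : ∀ S : Finset V, (∀ i, (S ∩ B i).card ≤ Dstar i) → f S ≤ f OPTstar)
    (γ : ℝ) (hγ0 : 0 ≤ γ) (hγ1 : γ ≤ 1)
    (hγ : ∀ S L : Finset V, Disjoint S L → S.card < dbarstar → L.card ≤ ∑ i, Dstar i →
      γ * (f (S ∪ L) - f S) ≤ ∑ v ∈ L, (f (insert v S) - f S))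
    (Xc : ℕ → Finset V)
    (hX0card : (Xc 0).card ≤ dbar)
    (hX0val : f (Xc 0) ≥ (1 - (1 - γ / (∑ i, Dstar i : ℝ)) ^ dbar) * f OPTstar)
    (hstep : ∀ j < dbarstar - dbar, ∃ v ∉ Xc j,
      Xc (j + 1) = insert v (Xc j) ∧
      (∀ i, ((insert v (Xc j)) ∩ B i).card ≤ Dstar i) ∧
      ∀ w ∉ Xc j, (∀ i, ((insert w (Xc j)) ∩ B i).card ≤ Dstar i) →
        f (insert w (Xc j)) ≤ f (insert v (Xc j))) :
    (∀ i, ((Xc (dbarstar - dbar)) ∩ B i).card ≤ Dstar i) ∧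
    (Xc (dbarstar - dbar)).card ≤ dbarstar ∧
    f (Xc (dbarstar - dbar)) ≥
      (1 - (1 - γ / (∑ i, Dstar i : ℝ)) ^ dbarstar) * f OPTstar ∧
    f (Xc (dbarstar - dbar)) ≥
      (1 - Real.exp (-(γ * dbarstar) / (∑ i, Dstar i : ℝ))) * f OPTstar := by
  have hmin : ∀ i, dbarstar ≤ Dstar i := fun i => hdbarstar ▸ Finset.inf'_le _ (Finset.mem_univ i)
  have hsum : 1 ≤ ∑ i, Dstar i :=
    (hDstar ⟨0, hk⟩).1.trans (Finset.single_le_sum_of_canonicallyOrdered (Finset.mem_univ _))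
  rw [← Nat.cast_sum] at hX0val ⊢
  exact adaptation_monotone_general hgt.le (fun S => IsBlockFeasible.of_card_le hmin)
    (fun X Y => hmono X Y) hsum
    (IsBlockFeasible.card_le_sum hOPTfeas fun v _ => (hpart v).exists) (hf0 _)
    hγ hγ0 (hγ1.trans (Nat.one_le_cast.2 hsum)) hX0card hX0val hstep
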